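/- arXiv:1905.03388 — 5 statements merged into one kernel-verified Lean document; each statement's English description precedes it below -/
import Mathlib

section
/- For all positive integers a, b and every nonnegative integer k, one has ⌈ak/b⌉ = Σ_{i=1}^{a} ⌊(k + ⌈ib/a⌉ − 1)/b⌋. -/
theorem ceil_mul_div_eq_sum_floor (a b : ℕ) (ha : 0 < a) (hb : 0 < b) (k : ℕ) :
    ⌈(a * k : ℚ) / (b : ℚ)⌉₊ =
      ∑ i ∈ Finset.Icc 1 a, (k + ⌈(i * b : ℚ) / (a : ℚ)⌉₊ - 1) / b := by
  have haq : (0 : ℚ) < a := by exact_mod_cast ha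
  have hbq : (0 : ℚ) < b := by exact_mod_cast hb
  have hlt : ∀ x y z : ℕ, 0 < z → (x < ⌈(y : ℚ) / (z : ℚ)⌉₊ ↔ x * z < y) := by
    intro x y z hz
    have hzq : (0 : ℚ) < z := by exact_mod_cast hz
    rw [Nat.lt_ceil, lt_div_iff₀ hzq]
    exact_mod_cast Iff.rfl
  obtain ⟨q, r, hr, rfl⟩ : ∃ q r, r < b ∧ k = b * q + r :=
    ⟨k / b, k % b, Nat.mod_lt _ hb, (Nat.div_add_mod k b).symm⟩
  set c := ⌈((a * r : ℕ) : ℚ) / (b : ℚ)⌉₊ with hc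
  have hca : c ≤ a := by
    by_contra h
    have := (hlt a (a * r) b hb).1 (by omega)
    have := Nat.mul_le_mul_left a hr.le
    omega
  have hL : ⌈(a * ((b * q + r : ℕ) : ℚ)) / (b : ℚ)⌉₊ = c + a * q := by
    rw [hc, ← Nat.ceil_add_natCast (by positivity)]
    congr 1
    push_cast
    field_simp
    ring
  have key : ∀ j ∈ Finset.range a,
      (b * q + r + ⌈((a - j : ℕ) * b : ℚ) / (a : ℚ)⌉₊ - 1) / b
        = q + if j < c then 1 else 0 := by
    intro j hj
    have hj : j < a := Finset.mem_range.1 hj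
    have e : ((a - j : ℕ) * b : ℚ) = (((a - j) * b : ℕ) : ℚ) := by push_cast; rfl
    rw [e]
    set d := ⌈(((a - j) * b : ℕ) : ℚ) / (a : ℚ)⌉₊ with hd
    have hd1 : 0 < d := by
      rw [hlt _ _ _ ha, zero_mul]
      exact Nat.mul_pos (by omega) hb
    have hdb : d ≤ b := by
      by_contra h
      have h1 := (hlt b ((a - j) * b) a ha).1 (by omega)
      have h2 := Nat.mul_le_mul_right b (Nat.sub_le a j)
      rw [Nat.mul_comm b a] at h1
      omega
    have hiff : j < c ↔ b - r < d := by
      rw [hlt _ _ _ hb, hlt _ _ _ ha]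
      zify [hr.le, hj.le]
      constructor <;> intro h <;> nlinarith
    have e2 : b * q + r + d - 1 = (r + d - 1) + b * q := by omega
    rw [e2, Nat.add_mul_div_left _ _ hb, Nat.add_comm]
    congr 1
    split_ifs with h
    · have := hiff.1 h
      rw [Nat.div_eq_iff hb]; omega
    · have := mt hiff.2 h
      exact Nat.div_eq_of_lt (by omega)
  rw [hL]
  have hs : ∑ i ∈ Finset.Icc 1 a, (b * q + r + ⌈(i * b : ℚ) / (a : ℚ)⌉₊ - 1) / b
      = ∑ j ∈ Finset.range a, (b * q + r + ⌈((a - j : ℕ) * b : ℚ) / (a : ℚ)⌉₊ - 1) / b := by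
    refine Finset.sum_bij' (fun i _ => a - i) (fun j _ => a - j) ?_ ?_ ?_ ?_ ?_
    · intro i hi; simp only [Finset.mem_Icc, Finset.mem_range] at *; omega
    · intro i hi; simp only [Finset.mem_Icc, Finset.mem_range] at *; omega
    · intro i hi; simp only [Finset.mem_Icc, Finset.mem_range] at *; omega
    · intro i hi; simp only [Finset.mem_Icc, Finset.mem_range] at *; omega
    · intro i hi
      simp only [Finset.mem_Icc] at hi
      rw [Nat.sub_sub_self hi.2]
  rw [hs, Finset.sum_congr rfl key, Finset.sum_add_distrib, Finset.sum_const, Finset.card_range,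
    smul_eq_mul, ← Finset.card_filter]
  have : (Finset.range a).filter (fun j => j < c) = Finset.range c := by
    ext j; simp only [Finset.mem_filter, Finset.mem_range]; omega
  rw [this, Finset.card_range, Nat.add_comm]
end

section
/- Let a and b be positive integers, and let s_0 ≤ s_1 ≤ ⋯ ≤ s_{a−1} be integers with 0 ≤ s_0 and s_{a−1} < b. If ⌈ak/b⌉ = Σ_{i=0}^{a−1} ⌊(k+s_i)/b⌋ holds for every nonnegative integer k, then s_i = ⌈(i+1)b/a⌉ − 1 for every i = 0, 1, …, a−1. -/
theorem ceil_aux (a b : ℕ) (hb : 0 < b) (s : ℕ → ℕ)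
    (hmono : ∀ i j, i ≤ j → j < a → s i ≤ s j) (hub : s (a - 1) < b)
    (hsum : ∀ k : ℕ, ⌈(a * k : ℚ) / (b : ℚ)⌉₊ = ∑ i ∈ Finset.range a, (k + s i) / b)
    (i m : ℕ) (hi : i < a) (hm : m ≤ b) : m ≤ s i ↔ a * m < (i + 1) * b := by
  obtain ⟨k, rfl⟩ := Nat.exists_eq_add_of_le hm
  obtain ⟨c, rfl⟩ := Nat.exists_eq_add_of_lt hi
  have hbq : (0 : ℚ) < ((m + k : ℕ) : ℚ) := by exact_mod_cast hb
  have hs := hsum k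
  have hlt : ∀ j, j < i + c + 1 → s j < m + k := fun j hj =>
    lt_of_le_of_lt (hmono j _ (by omega) (by omega)) hub
  have hsplit : ∑ j ∈ Finset.range (i + c + 1), (k + s j) / (m + k)
      = ∑ j ∈ Finset.range i, (k + s j) / (m + k) + (k + s i) / (m + k)
        + ∑ j ∈ Finset.range c, (k + s (i + 1 + j)) / (m + k) := by
    rw [← Finset.sum_range_succ, show i + c + 1 = (i + 1) + c by ring, Finset.sum_range_add]
  rw [hsplit] at hs
  constructor
  · intro h
    have h1 : 1 ≤ (k + s i) / (m + k) := by
      rw [Nat.one_le_div_iff hb]; omega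
    have h2 : c ≤ ∑ j ∈ Finset.range c, (k + s (i + 1 + j)) / (m + k) := by
      have := Finset.card_nsmul_le_sum (Finset.range c)
        (fun j => (k + s (i + 1 + j)) / (m + k)) 1 (by
          intro j hj
          have hj := Finset.mem_range.1 hj
          have := hmono i (i + 1 + j) (by omega) (by omega)
          show 1 ≤ (k + s (i + 1 + j)) / (m + k)
          rw [Nat.one_le_div_iff hb]; omega)
      simpa using this
    have h3 : c < ⌈((i + c + 1 : ℕ) * k : ℚ) / ((m + k : ℕ) : ℚ)⌉₊ := by omega
    rw [Nat.lt_ceil, lt_div_iff₀ hbq] at h3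
    have h4 : c * (m + k) < (i + c + 1) * k := by exact_mod_cast h3
    nlinarith
  · intro h
    by_contra hn
    have h0 : ∑ j ∈ Finset.range i, (k + s j) / (m + k) = 0 := by
      apply Finset.sum_eq_zero
      intro j hj
      have hj := Finset.mem_range.1 hj
      have := hmono j i (by omega) (by omega)
      apply Nat.div_eq_of_lt; omega
    have h1 : (k + s i) / (m + k) = 0 := by
      apply Nat.div_eq_of_lt; omega
    have h2 : ∑ j ∈ Finset.range c, (k + s (i + 1 + j)) / (m + k) ≤ c := by
      have := Finset.sum_le_card_nsmul (Finset.range c)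
        (fun j => (k + s (i + 1 + j)) / (m + k)) 1 (by
          intro j hj
          have hj := Finset.mem_range.1 hj
          have := hlt (i + 1 + j) (by omega)
          show (k + s (i + 1 + j)) / (m + k) ≤ 1
          apply Nat.le_of_lt_succ
          rw [Nat.div_lt_iff_lt_mul hb]; omega)
      simpa using this
    have h3 : ⌈((i + c + 1 : ℕ) * k : ℚ) / ((m + k : ℕ) : ℚ)⌉₊ ≤ c := by omega
    rw [Nat.ceil_le, div_le_iff₀ hbq] at h3
    have h4 : (i + c + 1) * k ≤ c * (m + k) := by exact_mod_cast h3
    nlinarith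

theorem ceil_decomposition_unique (a b : ℕ) (ha : 0 < a) (hb : 0 < b) (s : ℕ → ℕ)
    (hmono : ∀ i j, i ≤ j → j < a → s i ≤ s j) (hub : s (a - 1) < b)
    (hsum : ∀ k : ℕ, ⌈(a * k : ℚ) / (b : ℚ)⌉₊ = ∑ i ∈ Finset.range a, (k + s i) / b) :
    ∀ i < a, s i = ⌈((i + 1) * b : ℚ) / (a : ℚ)⌉₊ - 1 := by
  intro i hi
  have hlt : s i < b := lt_of_le_of_lt (hmono i (a - 1) (by omega) (by omega)) hub
  have haq : (0 : ℚ) < (a : ℚ) := by exact_mod_cast ha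
  have h1 := (ceil_aux a b hb s hmono hub hsum i (s i) hi hlt.le).1 le_rfl
  have h2 := mt (ceil_aux a b hb s hmono hub hsum i (s i + 1) hi hlt).2 (by omega)
  have h3 : s i < ⌈((i + 1) * b : ℚ) / (a : ℚ)⌉₊ := by
    rw [Nat.lt_ceil, lt_div_iff₀ haq, mul_comm]
    exact_mod_cast h1
  have h4 : ⌈((i + 1) * b : ℚ) / (a : ℚ)⌉₊ ≤ s i + 1 := by
    rw [Nat.ceil_le, div_le_iff₀ haq, mul_comm _ (a : ℚ)]
    exact_mod_cast not_lt.1 h2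
  omega
end

section
/- Let a < b be positive integers with r = b mod a > 0 and q = ⌊b/a⌋, and for i = 0, 1, …, a−1 let S_i = {⌈bi/a⌉, ⌈bi/a⌉+1, …, ⌈b(i+1)/a⌉−1}. Then for each i ∈ {0,…,a−1}, |S_i| = q+1 if and only if there exists an integer j with 0 ≤ j ≤ r−1 and i = ⌊aj/r⌋. -/
theorem ceil_aux_s9 (a x : ℕ) (ha : 0 < a) : x ≤ a * ⌈(x : ℚ) / (a : ℚ)⌉₊ ∧ a * ⌈(x : ℚ) / (a : ℚ)⌉₊ < x + a := by
  have ha' : (0 : ℚ) < a := by exact_mod_cast ha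
  have h1 := Nat.le_ceil ((x : ℚ) / (a : ℚ))
  have h2 := Nat.ceil_lt_add_one (show (0 : ℚ) ≤ (x : ℚ) / (a : ℚ) by positivity)
  rw [div_le_iff₀ ha'] at h1
  rw [← sub_lt_iff_lt_add, lt_div_iff₀ ha'] at h2
  constructor
  · have : (x : ℚ) ≤ a * ⌈(x : ℚ) / (a : ℚ)⌉₊ := by linarith
    exact_mod_cast this
  · have : (a : ℚ) * ⌈(x : ℚ) / (a : ℚ)⌉₊ < x + a := by linarith
    exact_mod_cast this

theorem core_aux (a q r i C D : ℕ) (ha : 0 < a) (hr : 0 < r) (hra : r < a) (hi : i < a)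
    (h1 : (a * q + r) * i ≤ a * C) (h2 : a * C < (a * q + r) * i + a)
    (h3 : (a * q + r) * (i + 1) ≤ a * D) (h4 : a * D < (a * q + r) * (i + 1) + a) :
    D - C = q + 1 ↔ ∃ j, j ≤ r - 1 ∧ i = a * j / r := by
  have hC : q * i ≤ C := by
    refine le_of_mul_le_mul_left (a := a) ?_ ha
    nlinarith [Nat.zero_le (r * i)]
  have hD : q * (i + 1) ≤ D := by
    refine le_of_mul_le_mul_left (a := a) ?_ ha
    nlinarith [Nat.zero_le (r * (i + 1))]
  obtain ⟨c, rfl⟩ := Nat.exists_eq_add_of_le hC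
  obtain ⟨d, rfl⟩ := Nat.exists_eq_add_of_le hD
  have h1 : r * i ≤ a * c := by nlinarith
  have h2 : a * c < r * i + a := by nlinarith
  have h3 : r * (i + 1) ≤ a * d := by nlinarith
  have h4 : a * d < r * (i + 1) + a := by nlinarith
  have e : q * (i + 1) = q * i + q := by ring
  have key : ∀ j, i = a * j / r ↔ r * i ≤ a * j ∧ a * j < r * (i + 1) := by
    intro j
    rw [eq_comm, Nat.div_eq_iff hr]
    have : r * (i + 1) = i * r + r := by ring
    have : r * i = i * r := by ring
    omega
  constructor
  · intro h
    have hd : d = c + 1 := by omega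
    subst hd
    have h5 : a * c < r * (i + 1) := by nlinarith
    refine ⟨c, ?_, (key c).2 ⟨h1, h5⟩⟩
    have : c < r := by
      refine Nat.lt_of_mul_lt_mul_left (a := a) ?_
      nlinarith
    omega
  · rintro ⟨j, -, hj⟩
    obtain ⟨h5, h6⟩ := (key j).1 hj
    have hcj : c < j + 1 := by
      refine Nat.lt_of_mul_lt_mul_left (a := a) ?_
      nlinarith
    have hjd : j < d := by
      refine Nat.lt_of_mul_lt_mul_left (a := a) ?_
      nlinarith
    have hdc : d < c + 2 := by
      refine Nat.lt_of_mul_lt_mul_left (a := a) ?_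
      nlinarith
    omega

theorem card_subinterval_eq_q_add_one_iff (a b : ℕ) (ha : 0 < a) (hab : a < b)
    (hr : 0 < b % a)
    (S : ℕ → Finset ℕ)
    (hS : ∀ i, S i = Finset.Ico ⌈(b * i : ℚ) / (a : ℚ)⌉₊ ⌈(b * (i + 1) : ℚ) / (a : ℚ)⌉₊) :
    ∀ i < a, ((S i).card = b / a + 1 ↔ ∃ j, j ≤ b % a - 1 ∧ i = a * j / (b % a)) := by
  intro i hi
  rw [hS, Nat.card_Ico]
  have A := ceil_aux_s9 a (b * i) ha
  have B := ceil_aux_s9 a (b * (i + 1)) ha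
  push_cast at A B
  have hb := Nat.div_add_mod b a
  apply core_aux a (b / a) (b % a) i _ _ ha hr (Nat.mod_lt _ ha) hi <;> rw [hb]
  exacts [A.1, A.2, B.1, B.2]
end

section
/- Let r < a be positive integers with r not dividing a, and let R be a permutation of [r] = {0,…,r−1} that is nice corresponding to a. Let R̄ be the complement of R, defined by R̄(i) = r−1−R(i). Then for every integer b > a with b ≡ r (mod a), the extension sequence of (R̄, a) is a permutation of [a] that is nice corresponding to b. -/
/-- `A` is a permutation of `[a] = {0, 1, …, a-1}`, viewed as a function `ℕ → ℕ`
restricted to `{i | i < a}`. -/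
def IsPermOf (a : ℕ) (A : ℕ → ℕ) : Prop :=
  Set.BijOn A {i | i < a} {i | i < a}

/-- The complement of a permutation `A` of `[a]`: `Ā(i) = a - 1 - A(i)`. -/
def permCompl (a : ℕ) (A : ℕ → ℕ) : ℕ → ℕ := fun i => a - 1 - A i

/-- A permutation `A` of `[a]` is *nice* corresponding to `b > a` with `a ∤ b`,
where `r = b % a` and `d = gcd(a, b)`, if `A(i) < A(i + r)` for all
`0 ≤ i ≤ a - r - 1` and `A(j) < A(j - a + r)` for all `a - r ≤ j ≤ a - d - 1`. -/
def Nice (a b : ℕ) (A : ℕ → ℕ) : Prop :=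
  (∀ i, i + b % a < a → A i < A (i + b % a)) ∧
  (∀ j, a - b % a ≤ j → j + Nat.gcd a b < a → A j < A (j + b % a - a))

/-- `B` is the extension sequence of the pair `(A, b)`, where `A` is a permutation
of `[a]`: `B` is the permutation of `[b]` with `B(i) < B(j)` iff
`A(i mod a) < A(j mod a)`, or `A(i mod a) = A(j mod a)` and `i < j`. -/
def IsExtSeq (a b : ℕ) (A B : ℕ → ℕ) : Prop :=
  IsPermOf b B ∧
  ∀ i < b, ∀ j < b,
    (B i < B j ↔ A (i % a) < A (j % a) ∨ (A (i % a) = A (j % a) ∧ i < j))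

theorem extSeq_of_nice_is_nice (r a : ℕ) (hr : 0 < r) (hra : r < a) (hnd : ¬ r ∣ a)
    (R : ℕ → ℕ) (hR : IsPermOf r R) (hnice : Nice r a R)
    (b : ℕ) (hab : a < b) (hmod : b % a = r)
    (B : ℕ → ℕ) (hB : IsExtSeq r a (permCompl r R) B) :
    IsPermOf a B ∧ Nice a b B := by
  refine ⟨hB.1, ?_, ?_⟩
  · intro i hi
    rw [hmod] at hi ⊢
    rw [hB.2 i (by omega) (i + r) hi]
    right
    rw [Nat.add_mod_right]
    exact ⟨rfl, by omega⟩
  · intro j hj hjd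
    have hg : Nat.gcd a b = Nat.gcd r a := by
      rw [← hmod, ← Nat.gcd_rec]
    rw [hg] at hjd
    rw [hmod] at hj ⊢
    obtain ⟨k, hk⟩ : ∃ k, j + r = a + k := ⟨j + r - a, by omega⟩
    have hk' : j + r - a = k := by omega
    rw [hk']
    have hkd : k + Nat.gcd r a < r := by omega
    have hkr : k < r := by omega
    rw [hB.2 j (by omega) k (by omega)]
    left
    have hs : a % r < r := Nat.mod_lt _ hr
    have hjm : j % r = (k + a % r) % r := by
      rw [← Nat.add_mod_right j r, hk, Nat.add_comm a k, Nat.add_mod_mod]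
    have hlt : R (j % r) < r := hR.1 (Nat.mod_lt _ hr : j % r < r)
    have key : R k < R (j % r) := by
      rw [hjm]
      by_cases h : k + a % r < r
      · rw [Nat.mod_eq_of_lt h]
        exact hnice.1 k h
      · rw [Nat.mod_eq_sub_mod (by omega), Nat.mod_eq_of_lt (by omega)]
        exact hnice.2 k (by omega) hkd
    rw [Nat.mod_eq_of_lt hkr]
    unfold permCompl
    omega
end

section
/- Let a < b be positive integers with r = b mod a > 0, let R be a permutation of [r] with complement R̄, let A be the extension sequence of (R, a), and let A' be the extension sequence of (R̄, a). Then {A'(i) : 0 ≤ i ≤ r−1} = {a−1−A(i) : a−r ≤ i ≤ a−1}; that is, the set of the first r entries of A' equals the set obtained by subtracting each of the last r entries of A from a−1. -/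
theorem aux_card_lt (a : ℕ) (B : ℕ → ℕ) (hB : IsPermOf a B) (c : ℕ → Prop) [DecidablePred c] :
    ((Finset.range a).filter (fun j => c (B j))).card = ((Finset.range a).filter c).card := by
  obtain ⟨hm, hinj, hs⟩ := hB
  refine Finset.card_bij (fun j _ => B j) ?_ ?_ ?_
  · intro j hj
    simp only [Finset.mem_filter, Finset.mem_range] at hj ⊢
    exact ⟨hm hj.1, hj.2⟩
  · intro j hj k hk h
    simp only [Finset.mem_filter, Finset.mem_range] at hj hk
    exact hinj hj.1 hk.1 h
  · intro k hk
    simp only [Finset.mem_filter, Finset.mem_range] at hk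
    obtain ⟨j, hj, rfl⟩ := hs (show k ∈ {i | i < a} from hk.1)
    exact ⟨j, by simpa using ⟨hj, hk.2⟩, rfl⟩

theorem aux_lt (a x : ℕ) (hx : x < a) : ((Finset.range a).filter (fun j => j < x)).card = x := by
  have : (Finset.range a).filter (fun j => j < x) = Finset.range x := by
    ext j; simp only [Finset.mem_filter, Finset.mem_range]; omega
  rw [this, Finset.card_range]

theorem aux_gt (a x : ℕ) : ((Finset.range a).filter (fun j => x < j)).card = a - 1 - x := by
  have : (Finset.range a).filter (fun j => x < j) = Finset.Ico (x + 1) a := by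
    ext j; simp only [Finset.mem_filter, Finset.mem_range, Finset.mem_Ico]; omega
  rw [this, Nat.card_Ico]; omega

theorem aux_key (a r : ℕ) (hr : 0 < r)
    (R : ℕ → ℕ) (hR : IsPermOf r R) (A A' : ℕ → ℕ) (hA : IsExtSeq r a R A)
    (hA' : IsExtSeq r a (permCompl r R) A') (i k : ℕ) (hi : i < r) (hk : k < a) (hra : r < a)
    (hk2 : a - r ≤ k) (hik : k % r = i) : A' i = a - 1 - A k := by
  rw [← aux_gt a (A k), ← aux_card_lt a A hA.1 (fun y => A k < y),
    ← aux_lt a (A' i) (hA'.1.mapsTo (show i < a by omega)),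
    ← aux_card_lt a A' hA'.1 (fun y => y < A' i)]
  congr 1
  apply Finset.filter_congr
  intro j hj
  rw [Finset.mem_range] at hj
  rw [hA'.2 j hj i (by omega), hA.2 k hk j hj, hik, Nat.mod_eq_of_lt hi]
  have hjr : j % r < r := Nat.mod_lt _ hr
  have h1 : R i < r := hR.mapsTo hi
  have h2 : R (j % r) < r := hR.mapsTo hjr
  have h3 : R i = R (j % r) → i = j % r := fun h => hR.injOn hi hjr h
  have h4 : j % r ≤ j := Nat.mod_le _ _
  have h5 : i = j % r → ¬ k < j := by
    intro h hkj
    have hd : r ∣ j - k := (Nat.modEq_iff_dvd' hkj.le).1 (hik.trans h)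
    have := Nat.le_of_dvd (by omega) hd
    omega
  simp only [permCompl]
  constructor
  · rintro (h | ⟨h, h'⟩)
    · left; omega
    · have := h3 (by omega); omega
  · rintro (h | ⟨h, h'⟩)
    · left; omega
    · exact absurd h' (h5 (h3 h))

theorem first_entries_eq_compl_last_entries (a b : ℕ) (ha : 0 < a) (hab : a < b)
    (hr : 0 < b % a)
    (R : ℕ → ℕ) (hR : IsPermOf (b % a) R)
    (A A' : ℕ → ℕ) (hA : IsExtSeq (b % a) a R A)
    (hA' : IsExtSeq (b % a) a (permCompl (b % a) R) A') :
    (Finset.range (b % a)).image A' = (Finset.Ico (a - b % a) a).image (fun i => a - 1 - A i) := by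
  have hra : b % a < a := Nat.mod_lt _ ha
  generalize b % a = r at *
  ext x
  simp only [Finset.mem_image, Finset.mem_range, Finset.mem_Ico]
  constructor
  · rintro ⟨i, hi, rfl⟩
    have e1 := Nat.div_add_mod (a - 1 - i) r
    have e2 := Nat.mod_lt (a - 1 - i) hr
    refine ⟨i + r * ((a - 1 - i) / r), ⟨by omega, by omega⟩, ?_⟩
    refine (aux_key a r hr R hR A A' hA hA' i _ hi (by omega) hra (by omega) ?_).symm
    rw [Nat.add_mul_mod_self_left, Nat.mod_eq_of_lt hi]
  · rintro ⟨k, ⟨hk1, hk2⟩, rfl⟩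
    exact ⟨k % r, Nat.mod_lt _ hr,
      aux_key a r hr R hR A A' hA hA' _ k (Nat.mod_lt _ hr) hk2 hra hk1 rfl⟩
end
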